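/- Let 0 < β₁ < β₂ < ⋯ < βₙ, λ > 0, σ ∈ ℝ, and x ∈ ℝ₊ⁿ. Define h(y) = Σ_{i=1}^n βᵢ yᵢ + λ ( Σ_{i=1}^n (xᵢ − yᵢ) )² − 2λσ Σ_{i=1}^n (xᵢ − yᵢ) for y ∈ [0,x]. Then the vector y*(x) with components y*ᵢ = min( ( Σ_{j=i}^n x_j − βᵢ/(2λ) − σ )₊ , xᵢ ), i = 1, …, n, is a minimizer of h over the box [0,x]. -/

import Mathlib

open Finset

/-! Put `θᵢ = βᵢ/(2λ) + σ` and let `T` be the total retained loss `Σᵢ (xᵢ - y*ᵢ)`. The objective is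
a quadratic with `∂h/∂yᵢ = 2λ(θᵢ - T)` at `y*` and quadratic part `λ(Σᵢ (yᵢ - y*ᵢ))² ≥ 0`, so it
suffices that `θᵢ ≤ T` whenever `y*ᵢ > 0` and `T ≤ θᵢ` whenever `y*ᵢ < xᵢ`. Since `θ` is
monotone, the first need only be checked at the last index with `y*ᵢ > 0`, beyond which everything
is retained, and the second at the first index with `y*ᵢ < xᵢ`, before which nothing is retained.
-/

variable {ι R : Type*}

section Contract

variable [AddCommGroup R] [LinearOrder R]

/-- The reinsurance contract `Rᵢ(x) = min((Σ_{j ≥ i} xⱼ - θᵢ)₊, xᵢ)`: the ceded part of the loss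
`xᵢ`, where the aggregate loss of the risks `j ≥ i` is covered above the deductible `θᵢ`. The
deductibles of the optimal contract are `θᵢ = βᵢ/(2λ) + σ`. -/
def cession [Preorder ι] [LocallyFiniteOrderTop ι] (θ x : ι → R) (i : ι) : R :=
  min (max (∑ j ∈ Ici i, x j - θ i) 0) (x i)

section Preorder

variable [Preorder ι] [LocallyFiniteOrderTop ι] {θ x : ι → R} {i : ι}

theorem cession_le : cession θ x i ≤ x i :=
  min_le_right _ _

theorem cession_nonneg (hx : 0 ≤ x i) : 0 ≤ cession θ x i :=
  le_min (le_max_right _ _) hx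

theorem cession_le_sum_Ici_sub (hi : 0 < cession θ x i) :
    cession θ x i ≤ ∑ j ∈ Ici i, x j - θ i :=
  (le_max_iff.1 (min_le_left _ _)).resolve_right hi.not_ge

theorem sum_Ici_sub_le_cession (hi : cession θ x i < x i) :
    ∑ j ∈ Ici i, x j - θ i ≤ cession θ x i :=
  (le_max_left _ _).trans ((min_le_iff.1 le_rfl).resolve_right hi.not_ge)

end Preorder

variable [IsOrderedAddMonoid R] [Fintype ι]

theorem le_sum_sub_cession_of_pos [PartialOrder ι] [LocallyFiniteOrderTop ι] {θ x : ι → R} {i : ι}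
    (hθ : Monotone θ) (hi : 0 < cession θ x i) : θ i ≤ ∑ j, (x j - cession θ x j) := by
  obtain ⟨m, him, hm⟩ := Finite.exists_le_maximal (p := fun k => 0 < cession θ x k) hi
  have retained_above : ∀ k ∈ Ioi m, x k ≤ x k - cession θ x k := fun k hk =>
    (le_sub_self_iff _).2 (not_lt.1 (hm.not_prop_of_gt (mem_Ioi.1 hk)))
  calc θ i ≤ θ m := hθ him
    _ ≤ ∑ j ∈ Ici m, x j - cession θ x m := le_sub_comm.1 (cession_le_sum_Ici_sub hm.prop)
    _ = (x m - cession θ x m) + ∑ j ∈ Ioi m, x j := by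
      rw [← add_sum_Ioi_eq_sum_Ici, add_sub_right_comm]
    _ ≤ (x m - cession θ x m) + ∑ j ∈ Ioi m, (x j - cession θ x j) := by
      gcongr with k hk; exact retained_above k hk
    _ = ∑ j ∈ Ici m, (x j - cession θ x j) :=
      add_sum_Ioi_eq_sum_Ici (f := fun j => x j - cession θ x j) m
    _ ≤ ∑ j, (x j - cession θ x j) :=
      sum_le_univ_sum_of_nonneg fun j => sub_nonneg.2 cession_le

theorem sum_sub_cession_le_of_lt [LinearOrder ι] [LocallyFiniteOrderTop ι] {θ x : ι → R} {i : ι}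
    (hθ : Monotone θ) (hx : 0 ≤ x) (hi : cession θ x i < x i) :
    ∑ j, (x j - cession θ x j) ≤ θ i := by
  obtain ⟨m, hmi, hm⟩ := Finite.exists_le_minimal (p := fun k => cession θ x k < x k) hi
  have ceded_below : ∀ k ∉ Ici m, x k - cession θ x k = 0 := fun k hk =>
    sub_eq_zero.2 <| (cession_le.eq_of_not_lt (hm.not_prop_of_lt (by simpa using hk))).symm
  calc ∑ j, (x j - cession θ x j)
      = ∑ j ∈ Ici m, (x j - cession θ x j) :=
        (sum_subset (subset_univ _) fun k _ => ceded_below k).symm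
    _ = (x m - cession θ x m) + ∑ j ∈ Ioi m, (x j - cession θ x j) :=
        (add_sum_Ioi_eq_sum_Ici m).symm
    _ ≤ (x m - cession θ x m) + ∑ j ∈ Ioi m, x j := by
      gcongr with k; exact sub_le_self _ (cession_nonneg (hx k))
    _ = ∑ j ∈ Ici m, x j - cession θ x m := by
      rw [← add_sum_Ioi_eq_sum_Ici, add_sub_right_comm]
    _ ≤ θ m := sub_le_comm.1 (sum_Ici_sub_le_cession hm.prop)
    _ ≤ θ i := hθ hmi

end Contract

theorem mul_sub_nonneg_of_complementary [Ring R] [LinearOrder R] [IsOrderedRing R]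
    {a b g y z : R} (hy : y ∈ Set.Icc a b) (hleft : a < z → g ≤ 0) (hright : z < b → 0 ≤ g) :
    0 ≤ g * (y - z) := by
  rcases lt_trichotomy y z with h | rfl | h
  · exact mul_nonneg_of_nonpos_of_nonpos (hleft (hy.1.trans_lt h)) (sub_nonpos.2 h.le)
  · simp
  · exact mul_nonneg (hright (h.trans_le hy.2)) (sub_nonneg.2 h.le)

section Lagrangian

variable [Fintype ι] [CommRing R]

/-- The pointwise Lagrangian `h(y)` of the reinsurance problem: the premium `Σᵢ βᵢ yᵢ` of ceding
`y` out of the losses `x`, plus `λ T² - 2λσ T` for the retained total `T = Σᵢ (xᵢ - yᵢ)`. -/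
def reinsuranceLagrangian (β : ι → R) (lam σ : R) (x y : ι → R) : R :=
  ∑ i, β i * y i + lam * (∑ i, (x i - y i)) ^ 2 - 2 * lam * σ * ∑ i, (x i - y i)

theorem reinsuranceLagrangian_eq_add (β : ι → R) (lam σ : R) (x y z : ι → R) :
    reinsuranceLagrangian β lam σ x y = reinsuranceLagrangian β lam σ x z +
      ∑ i, (β i + 2 * lam * σ - 2 * lam * ∑ j, (x j - z j)) * (y i - z i) +
      lam * (∑ i, (y i - z i)) ^ 2 := by
  simp only [reinsuranceLagrangian, sub_mul, add_mul, mul_sub, sum_sub_distrib, sum_add_distrib,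
    ← mul_sum]
  ring

theorem isMinOn_reinsuranceLagrangian_of_complementary [LinearOrder R] [IsOrderedRing R]
    {β x z : ι → R} {lam σ : R} (hlam : 0 ≤ lam)
    (hpos : ∀ i, 0 < z i → β i + 2 * lam * σ - 2 * lam * ∑ j, (x j - z j) ≤ 0)
    (hlt : ∀ i, z i < x i → 0 ≤ β i + 2 * lam * σ - 2 * lam * ∑ j, (x j - z j)) :
    IsMinOn (reinsuranceLagrangian β lam σ x) (Set.Icc 0 x) z := by
  refine isMinOn_iff.2 fun y hy => ?_
  rw [reinsuranceLagrangian_eq_add β lam σ x y z, add_assoc]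
  refine le_add_of_nonneg_right (add_nonneg (sum_nonneg fun i _ => ?_)
    (mul_nonneg hlam (sq_nonneg _)))
  exact mul_sub_nonneg_of_complementary ⟨hy.1 i, hy.2 i⟩ (hpos i) (hlt i)

end Lagrangian

theorem stmt17_general [Field R] [LinearOrder R] [IsStrictOrderedRing R] [Fintype ι]
    [LinearOrder ι] [LocallyFiniteOrderTop ι] {β x : ι → R} {lam : R} (hβ : Monotone β) (σ : R)
    (hlam : 0 < lam) (hx : 0 ≤ x) :
    cession (fun i => β i / (2 * lam) + σ) x ∈ Set.Icc 0 x ∧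
      IsMinOn (reinsuranceLagrangian β lam σ x) (Set.Icc 0 x)
        (cession (fun i => β i / (2 * lam) + σ) x) := by
  set θ : ι → R := fun i => β i / (2 * lam) + σ with hθ_def
  have hθ : Monotone θ := fun i j hij => by
    have := hβ hij
    simp only [hθ_def]; gcongr
  have gradient_eq : ∀ i T, β i + 2 * lam * σ - 2 * lam * T = 2 * lam * (θ i - T) := fun i T => by
    simp only [hθ_def]; field_simp
  refine ⟨⟨fun i => cession_nonneg (hx i), fun _ => cession_le⟩,
    isMinOn_reinsuranceLagrangian_of_complementary hlam.le (fun i hi => ?_) fun i hi => ?_⟩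
  · rw [gradient_eq]
    exact mul_nonpos_of_nonneg_of_nonpos (by positivity)
      (sub_nonpos.2 (le_sum_sub_cession_of_pos hθ hi))
  · rw [gradient_eq]
    exact mul_nonneg (by positivity) (sub_nonneg.2 (sum_sub_cession_le_of_lt hθ hx hi))

/-- for `0 < β₁ < ⋯ < βₙ`, `λ > 0`, `σ ∈ ℝ` and `x ∈ ℝ₊ⁿ`, the
vector `y*` with components
`y*ᵢ = min( ( Σ_{j≥i} xⱼ − βᵢ/(2λ) − σ )₊ , xᵢ )`
is a minimizer over the box `[0,x]` of the Lagrangian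
`h(y) = Σᵢ βᵢ yᵢ + λ (Σᵢ (xᵢ − yᵢ))² − 2λσ Σᵢ (xᵢ − yᵢ)`.
(Indices range over `Fin (n+1)` so that there is at least one risk.) -/
theorem stmt17 (n : ℕ) (β : Fin (n + 1) → ℝ) (hβpos : ∀ i, 0 < β i)
    (hβ : StrictMono β) (lam σ : ℝ) (hlam : 0 < lam)
    (x : Fin (n + 1) → ℝ) (hx : ∀ i, 0 ≤ x i)
    (ys : Fin (n + 1) → ℝ)
    (hys : ∀ i : Fin (n + 1), ys i =
      min (max ((∑ j ∈ Finset.Ici i, x j) - β i / (2 * lam) - σ) 0) (x i)) :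
    (∀ i, 0 ≤ ys i ∧ ys i ≤ x i) ∧
    ∀ y : Fin (n + 1) → ℝ, (∀ i, 0 ≤ y i ∧ y i ≤ x i) →
      ((∑ i, β i * ys i) + lam * (∑ i, (x i - ys i)) ^ 2
          - 2 * lam * σ * (∑ i, (x i - ys i)))
        ≤ ((∑ i, β i * y i) + lam * (∑ i, (x i - y i)) ^ 2
          - 2 * lam * σ * (∑ i, (x i - y i))) := by
  obtain rfl : ys = cession (fun i => β i / (2 * lam) + σ) x := by
    ext i; rw [hys, cession, sub_sub]
  obtain ⟨hmem, hmin⟩ := stmt17_general hβ.monotone σ hlam hx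
  exact ⟨forall_and.2 hmem, fun y hy => hmin (forall_and.1 hy)⟩
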